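/- If a generalized rectangular diagram R' is obtained from a generalized rectangular diagram R by a stabilization of type L, then R' can be obtained from R by a finite sequence consisting of two vertex additions and one flype of type L. -/

import Mathlib

namespace RectDiag

/-- A generalized rectangular diagram: a finite subset of `ℝ²`, whose elements are
called the vertices of the diagram. -/
abbrev GRD := Finset (ℝ × ℝ)

/-- Two diagrams are combinatorially equivalent (and hence identified) if one maps onto
the other under `(x, y) ↦ (f x, g y)` for some strictly increasing `f g : ℝ → ℝ`. -/
def CombEquiv (R R' : GRD) : Prop :=
  ∃ f g : ℝ → ℝ, StrictMono f ∧ StrictMono g ∧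
    R' = R.image fun p => (f p.1, g p.2)

/-- Move every vertex on the vertical line `x = a` to the vertical line `x = b`. -/
noncomputable def moveCol (R : GRD) (a b : ℝ) : GRD :=
  R.image fun p => if p.1 = a then (b, p.2) else p

/-- Move every vertex on the horizontal line `y = a` to the horizontal line `y = b`. -/
noncomputable def moveRow (R : GRD) (a b : ℝ) : GRD :=
  R.image fun p => if p.2 = a then (p.1, b) else p

/-- Cyclic permutation: an extreme (rightmost, leftmost, top or bottom) edge is moved
to the opposite side of the diagram; only the coordinate perpendicular to the edge
changes. -/
def CyclicPermutation (R R' : GRD) : Prop :=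
  (∃ a b : ℝ, (∃ p ∈ R, p.1 = a) ∧
    (((∀ p ∈ R, p.1 ≤ a) ∧ ∀ p ∈ R, b < p.1) ∨
     ((∀ p ∈ R, a ≤ p.1) ∧ ∀ p ∈ R, p.1 < b)) ∧
    R' = moveCol R a b) ∨
  (∃ a b : ℝ, (∃ p ∈ R, p.2 = a) ∧
    (((∀ p ∈ R, p.2 ≤ a) ∧ ∀ p ∈ R, b < p.2) ∨
     ((∀ p ∈ R, a ≤ p.2) ∧ ∀ p ∈ R, p.2 < b)) ∧
    R' = moveRow R a b)

/-- Two sets of reals interleave in the cyclic order: their elements alternate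
`a₁ < b₁ < a₂ < b₂` (or with the roles of the two sets exchanged). -/
def Interleave (A B : ℝ → Prop) : Prop :=
  (∃ a₁, A a₁ ∧ ∃ b₁, B b₁ ∧ ∃ a₂, A a₂ ∧ ∃ b₂, B b₂ ∧ a₁ < b₁ ∧ b₁ < a₂ ∧ a₂ < b₂) ∨
  (∃ b₁, B b₁ ∧ ∃ a₁, A a₁ ∧ ∃ b₂, B b₂ ∧ ∃ a₂, A a₂ ∧ b₁ < a₁ ∧ a₁ < b₂ ∧ b₂ < a₂)

/-- Exchange the vertical lines `x = a` and `x = b` of a diagram. -/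
noncomputable def swapCols (R : GRD) (a b : ℝ) : GRD :=
  R.image fun p => if p.1 = a then (b, p.2) else if p.1 = b then (a, p.2) else p

/-- Exchange the horizontal lines `y = a` and `y = b` of a diagram. -/
noncomputable def swapRows (R : GRD) (a b : ℝ) : GRD :=
  R.image fun p => if p.2 = a then (p.1, b) else if p.2 = b then (p.1, a) else p

/-- Commutation: two neighboring parallel edges (no vertex lies strictly between the
two parallel lines containing them) that do not interleave exchange their positions. -/
def Commutation (R R' : GRD) : Prop :=
  (∃ a b : ℝ, a < b ∧ (∃ p ∈ R, p.1 = a) ∧ (∃ p ∈ R, p.1 = b) ∧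
    (∀ p ∈ R, ¬ (a < p.1 ∧ p.1 < b)) ∧
    ¬ Interleave (fun y => (a, y) ∈ R) (fun y => (b, y) ∈ R) ∧
    R' = swapCols R a b) ∨
  (∃ a b : ℝ, a < b ∧ (∃ p ∈ R, p.2 = a) ∧ (∃ p ∈ R, p.2 = b) ∧
    (∀ p ∈ R, ¬ (a < p.2 ∧ p.2 < b)) ∧
    ¬ Interleave (fun x => (x, a) ∈ R) (fun x => (x, b) ∈ R) ∧
    R' = swapRows R a b)

def strictlyBetween (a t b : ℝ) : Prop := (a < t ∧ t < b) ∨ (b < t ∧ t < a)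

/-- Stabilization: a vertex `(x, y)` is replaced by the three other corners of a small
square with corners `(x, y)`, `(x', y)`, `(x, y')`, `(x', y')` (fresh lines `x'`, `y'`,
with no vertex of the diagram strictly between the lines `x, x'` nor between `y, y'`).
The two new short edges (sides of the square through the corner `(x', y')`) emerge from
their common end downward-and-leftward or upward-and-rightward exactly when the square
lies to the upper right or to the lower left of the original vertex (type L,
`typeL = true`); for type N (`typeL = false`) they emerge upward-and-leftward or
downward-and-rightward, i.e. the square lies to the upper left or to the lower right. -/
def Stab (typeL : Bool) (R R' : GRD) : Prop :=
  ∃ x y x' y' : ℝ, (x, y) ∈ R ∧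
    (if typeL then ((x < x' ∧ y < y') ∨ (x' < x ∧ y' < y))
     else ((x' < x ∧ y < y') ∨ (x < x' ∧ y' < y))) ∧
    (∀ p ∈ R, ¬ strictlyBetween x p.1 x') ∧
    (∀ p ∈ R, ¬ strictlyBetween y p.2 y') ∧
    (∀ p ∈ R, p.1 ≠ x') ∧ (∀ p ∈ R, p.2 ≠ y') ∧
    R' = insert (x', y) (insert (x, y') (insert (x', y') (R.erase (x, y))))

/-- End shift.  For adjacent vertices `v₁`, `v₂` on an edge (no vertex of the diagram
between them on the edge), where for type L (`typeL = true`) the vertex `v₂` has the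
greater coordinate along the edge and for type N (`typeL = false`) the smaller one:
either the shifts of `v₁`, `v₂` by `ε > 0` in the positive perpendicular direction are
added and `v₁` is removed, or the shifts by `ε` in the negative perpendicular direction
are added and `v₂` is removed; `ε` is small enough that no vertex of the diagram lies
between (or on) the line through `v₁, v₂` and the line through the shifted vertices. -/
def EndShift (typeL : Bool) (R R' : GRD) : Prop :=
  (∃ a y₁ y₂ ε : ℝ, 0 < ε ∧ y₁ < y₂ ∧ (a, y₁) ∈ R ∧ (a, y₂) ∈ R ∧
    (∀ t : ℝ, (a, t) ∈ R → ¬ (y₁ < t ∧ t < y₂)) ∧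
    (((∀ p ∈ R, ¬ (a < p.1 ∧ p.1 ≤ a + ε)) ∧
       R' = insert (a + ε, y₁) (insert (a + ε, y₂)
         (R.erase (a, if typeL then y₁ else y₂)))) ∨
     ((∀ p ∈ R, ¬ (a - ε ≤ p.1 ∧ p.1 < a)) ∧
       R' = insert (a - ε, y₁) (insert (a - ε, y₂)
         (R.erase (a, if typeL then y₂ else y₁)))))) ∨
  (∃ a x₁ x₂ ε : ℝ, 0 < ε ∧ x₁ < x₂ ∧ (x₁, a) ∈ R ∧ (x₂, a) ∈ R ∧
    (∀ t : ℝ, (t, a) ∈ R → ¬ (x₁ < t ∧ t < x₂)) ∧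
    (((∀ p ∈ R, ¬ (a < p.2 ∧ p.2 ≤ a + ε)) ∧
       R' = insert (x₁, a + ε) (insert (x₂, a + ε)
         (R.erase (if typeL then x₁ else x₂, a)))) ∨
     ((∀ p ∈ R, ¬ (a - ε ≤ p.2 ∧ p.2 < a)) ∧
       R' = insert (x₁, a - ε) (insert (x₂, a - ε)
         (R.erase (if typeL then x₂ else x₁, a))))))

/-- Vertex addition: a new vertex is added on the vertical (respectively horizontal)
line through an existing vertex, provided no vertex of the diagram lies on the
horizontal (respectively vertical) line through the new vertex. -/
def VertexAddition (R R' : GRD) : Prop :=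
  ∃ v : ℝ × ℝ, v ∉ R ∧ R' = insert v R ∧
    (((∃ w ∈ R, w.1 = v.1) ∧ ∀ w ∈ R, w.2 ≠ v.2) ∨
     ((∃ w ∈ R, w.2 = v.2) ∧ ∀ w ∈ R, w.1 ≠ v.1))

/-- An elementary move of type L (`typeL = true`) or N (`typeL = false`): a cyclic
permutation, a commutation, a stabilization or destabilization of the given type, an
end shift of the given type, or a vertex addition. -/
def ElemMove (typeL : Bool) (R R' : GRD) : Prop :=
  CyclicPermutation R R' ∨ Commutation R R' ∨ Stab typeL R R' ∨ Stab typeL R' R ∨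
    EndShift typeL R R' ∨ VertexAddition R R'

/-- One step in a sequence of elementary moves of the given type; since diagrams are
identified up to combinatorial equivalence, combinatorially equivalent diagrams are
also related by a step. -/
def Step (typeL : Bool) (R R' : GRD) : Prop :=
  ElemMove typeL R R' ∨ CombEquiv R R'

/-- In the cyclic order (on `ℝ` closed up into a circle), the elements of `A`, then the
point `u`, then the elements of `B` occur in this cyclic order. -/
def CyclicBetween (A : Finset ℝ) (u : ℝ) (B : Finset ℝ) : Prop :=
  ((∀ a ∈ A, a < u) ∧ (∀ b ∈ B, u < b)) ∨
  ((∀ b ∈ B, u < b) ∧ (∀ a ∈ A, ∀ b ∈ B, b < a)) ∨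
  ((∀ a ∈ A, a < u) ∧ (∀ a ∈ A, ∀ b ∈ B, b < a))

/-- Edge breaking.  The vertices of a horizontal (respectively vertical) edge on the
line `c` are separated into two nonempty parts `S₁`, `S₂`, placed on neighboring lines
`c₁ ≤ c ≤ c₂` (`c₁ < c₂`, with no other vertex of the diagram between the lines `c₁`
and `c₂`), forming edges `e₁` (from `S₁`, on `c₁`) and `e₂` (from `S₂`, on `c₂`, the one
with the greater perpendicular coordinate); the two pieces are joined by a short edge on
a fresh line `u`, which in the cyclic order is greater than the coordinates of the
vertices of `e₂` and smaller than those of `e₁` for type L, and the other way around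
(the roles of `e₁` and `e₂` exchanged) for type N. -/
def EdgeBreaking (typeL : Bool) (R R' : GRD) : Prop :=
  (∃ c c₁ c₂ u : ℝ, ∃ S₁ S₂ : Finset ℝ,
    c₁ < c₂ ∧ c₁ ≤ c ∧ c ≤ c₂ ∧ S₁.Nonempty ∧ S₂.Nonempty ∧ Disjoint S₁ S₂ ∧
    (∀ x : ℝ, (x, c) ∈ R ↔ x ∈ S₁ ∪ S₂) ∧
    (∀ p ∈ R, p.1 ≠ u) ∧
    (∀ p ∈ R, c₁ ≤ p.2 ∧ p.2 ≤ c₂ → p.2 = c) ∧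
    (if typeL then CyclicBetween S₂ u S₁ else CyclicBetween S₁ u S₂) ∧
    R' = ((R.filter fun p => p.2 ≠ c) ∪ S₁.image (fun x => (x, c₁)) ∪
      S₂.image (fun x => (x, c₂)) ∪ {(u, c₁), (u, c₂)})) ∨
  (∃ c c₁ c₂ u : ℝ, ∃ S₁ S₂ : Finset ℝ,
    c₁ < c₂ ∧ c₁ ≤ c ∧ c ≤ c₂ ∧ S₁.Nonempty ∧ S₂.Nonempty ∧ Disjoint S₁ S₂ ∧
    (∀ y : ℝ, (c, y) ∈ R ↔ y ∈ S₁ ∪ S₂) ∧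
    (∀ p ∈ R, p.2 ≠ u) ∧
    (∀ p ∈ R, c₁ ≤ p.1 ∧ p.1 ≤ c₂ → p.1 = c) ∧
    (if typeL then CyclicBetween S₂ u S₁ else CyclicBetween S₁ u S₂) ∧
    R' = ((R.filter fun p => p.1 ≠ c) ∪ S₁.image (fun y => (c₁, y)) ∪
      S₂.image (fun y => (c₂, y)) ∪ {(c₁, u), (c₂, u)}))

/-- `p` lies in the open rectangle `(x₀, x₁) × (y₀, y₁)`. -/
def inRect (x₀ x₁ y₀ y₁ : ℝ) (p : ℝ × ℝ) : Prop :=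
  x₀ < p.1 ∧ p.1 < x₁ ∧ y₀ < p.2 ∧ p.2 < y₁

/-- A flype of type L (in the forward direction): for `x₀ < x₁ < x₂`, `y₀ < y₁ < y₂`,
with rectangles `r_ij = (x_i, x_{i+1}) × (y_j, y_{j+1})`: the rectangle `r₁₁` contains
no vertex; in each of `r₀₁` and `r₁₀`, of any two vertices the right one is higher; and
every vertex `v` in `r₀₀` has a vertex `v₀₁ ∈ r₀₁` with the same `x`-coordinate and a
vertex `v₁₀ ∈ r₁₀` with the same `y`-coordinate.  The move takes each such `v` to the
fourth corner of the rectangle with corners `v`, `v₀₁`, `v₁₀`, all other vertices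
staying fixed. -/
def FlypeLOnce (R R' : GRD) : Prop :=
  ∃ x₀ x₁ x₂ y₀ y₁ y₂ : ℝ, x₀ < x₁ ∧ x₁ < x₂ ∧ y₀ < y₁ ∧ y₁ < y₂ ∧
    (∀ p ∈ R, ¬ inRect x₁ x₂ y₁ y₂ p) ∧
    (∀ p ∈ R, ∀ q ∈ R, inRect x₀ x₁ y₁ y₂ p → inRect x₀ x₁ y₁ y₂ q →
      p.1 < q.1 → p.2 < q.2) ∧
    (∀ p ∈ R, ∀ q ∈ R, inRect x₁ x₂ y₀ y₁ p → inRect x₁ x₂ y₀ y₁ q →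
      p.1 < q.1 → p.2 < q.2) ∧
    ∃ φ : ℝ × ℝ → ℝ × ℝ,
      (∀ p ∈ R, ¬ inRect x₀ x₁ y₀ y₁ p → φ p = p) ∧
      (∀ p ∈ R, inRect x₀ x₁ y₀ y₁ p →
        ∃ q ∈ R, ∃ r ∈ R, inRect x₀ x₁ y₁ y₂ q ∧ q.1 = p.1 ∧
          inRect x₁ x₂ y₀ y₁ r ∧ r.2 = p.2 ∧ φ p = (r.1, q.2)) ∧
      R' = R.image φ

/-- A flype of type L: the move just described or its inverse. -/
def FlypeL (R R' : GRD) : Prop := FlypeLOnce R R' ∨ FlypeLOnce R' R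

/-- A fence diagram: posts are horizontal segments `[l, r] × {y}`, `y ∈ posts` (all
related by a vertical shift); wires are vertical segments recorded as
`(x, bottom level, top level)`, with endpoints interior to posts and no two wires on
the same vertical line. -/
structure Fence where
  posts : Finset ℝ
  l : ℝ
  r : ℝ
  wires : Finset (ℝ × ℝ × ℝ)
  hlr : l < r
  hx : ∀ w ∈ wires, l < w.1 ∧ w.1 < r
  hy : ∀ w ∈ wires, w.2.1 ∈ posts ∧ w.2.2 ∈ posts ∧ w.2.1 < w.2.2
  hinj : ∀ w ∈ wires, ∀ w' ∈ wires, w.1 = w'.1 → w = w'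

/-- Combinatorial equivalence of fence diagrams. -/
def FenceEquiv (F F' : Fence) : Prop :=
  ∃ f g : ℝ → ℝ, StrictMono f ∧ StrictMono g ∧
    F'.l = f F.l ∧ F'.r = f F.r ∧
    F'.posts = F.posts.image g ∧
    F'.wires = F.wires.image fun w => (f w.1, g w.2.1, g w.2.2)

/-- The wire on the vertical line `x` joining the posts at levels `p` and `q`. -/
noncomputable def mkWire (x p q : ℝ) : ℝ × ℝ × ℝ := (x, min p q, max p q)

/-- Twirl: the top (respectively bottom) post is moved to the opposite side, taking
along all wires attached to it. -/
def Twirl (F F' : Fence) : Prop :=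
  F'.l = F.l ∧ F'.r = F.r ∧
  ((∃ t b : ℝ, t ∈ F.posts ∧ (∀ y ∈ F.posts, y ≤ t) ∧ (∀ y ∈ F.posts, b < y) ∧
     F'.posts = insert b (F.posts.erase t) ∧
     F'.wires = F.wires.image fun w => if w.2.2 = t then (w.1, b, w.2.1) else w) ∨
   (∃ t b : ℝ, b ∈ F.posts ∧ (∀ y ∈ F.posts, b ≤ y) ∧ (∀ y ∈ F.posts, y < t) ∧
     F'.posts = insert t (F.posts.erase b) ∧
     F'.wires = F.wires.image fun w => if w.2.1 = b then (w.1, w.2.2, t) else w))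

/-- Turn: the rightmost (respectively leftmost) wire is moved to the opposite side. -/
def Turn (F F' : Fence) : Prop :=
  F'.l = F.l ∧ F'.r = F.r ∧ F'.posts = F.posts ∧
  ((∃ w ∈ F.wires, ∃ x : ℝ, (∀ w' ∈ F.wires, w'.1 ≤ w.1) ∧
     F.l < x ∧ (∀ w' ∈ F.wires, w' ≠ w → x < w'.1) ∧ x < w.1 ∧
     F'.wires = insert (x, w.2) (F.wires.erase w)) ∨
   (∃ w ∈ F.wires, ∃ x : ℝ, (∀ w' ∈ F.wires, w.1 ≤ w'.1) ∧
     x < F.r ∧ (∀ w' ∈ F.wires, w' ≠ w → w'.1 < x) ∧ w.1 < x ∧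
     F'.wires = insert (x, w.2) (F.wires.erase w)))

/-- Two wires interleave if exactly one endpoint level of one lies strictly between the
endpoint levels of the other. -/
def WiresInterleave (w w' : ℝ × ℝ × ℝ) : Prop :=
  (w.2.1 < w'.2.1 ∧ w'.2.1 < w.2.2 ∧ w.2.2 < w'.2.2) ∨
  (w'.2.1 < w.2.1 ∧ w.2.1 < w'.2.2 ∧ w'.2.2 < w.2.2)

/-- Slip: two neighboring non-interleaving wires exchange their horizontal positions. -/
def Slip (F F' : Fence) : Prop :=
  F'.l = F.l ∧ F'.r = F.r ∧ F'.posts = F.posts ∧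
  ∃ w₁ ∈ F.wires, ∃ w₂ ∈ F.wires, w₁.1 < w₂.1 ∧
    (∀ w ∈ F.wires, ¬ (w₁.1 < w.1 ∧ w.1 < w₂.1)) ∧
    ¬ WiresInterleave w₁ w₂ ∧
    F'.wires = insert (w₂.1, w₁.2) (insert (w₁.1, w₂.2) ((F.wires.erase w₁).erase w₂))

/-- `a`, `b`, `c` occur in this cyclic order on `ℝ` closed up into a circle. -/
def CyclicOrd3 (a b c : ℝ) : Prop :=
  (a < b ∧ b < c) ∨ (b < c ∧ c < a) ∨ (c < a ∧ a < b)

/-- Slide: given two neighboring wires, the left joining posts at levels `a` and `b`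
and the right joining posts at levels `a` and `c` with `a < b < c < a` in the cyclic
order, they are replaced by two wires at the same horizontal positions, the left
joining levels `b` and `c` and the right joining levels `b` and `a`. -/
def Slide (F F' : Fence) : Prop :=
  F'.l = F.l ∧ F'.r = F.r ∧ F'.posts = F.posts ∧
  ∃ a b c x₁ x₂ : ℝ, x₁ < x₂ ∧ CyclicOrd3 a b c ∧
    mkWire x₁ a b ∈ F.wires ∧ mkWire x₂ a c ∈ F.wires ∧
    (∀ w ∈ F.wires, ¬ (x₁ < w.1 ∧ w.1 < x₂)) ∧
    F'.wires = insert (mkWire x₁ b c) (insert (mkWire x₂ b a)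
      ((F.wires.erase (mkWire x₁ a b)).erase (mkWire x₂ a c)))

/-- Inflation: a new post is added at a fresh vertical level and joined to some
existing post by one new wire (on a fresh vertical line). -/
def Inflation (F F' : Fence) : Prop :=
  F'.l = F.l ∧ F'.r = F.r ∧
  ∃ n m x : ℝ, n ∉ F.posts ∧ m ∈ F.posts ∧
    F.l < x ∧ x < F.r ∧ (∀ w ∈ F.wires, w.1 ≠ x) ∧
    F'.posts = insert n F.posts ∧
    F'.wires = insert (mkWire x n m) F.wires

/-- A fence move: a twirl, a turn, a slip, a slide, an inflation or a deflation. -/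
def FenceMove (F F' : Fence) : Prop :=
  Twirl F F' ∨ Turn F F' ∨ Slip F F' ∨ Slide F F' ∨ Inflation F F' ∨ Inflation F' F

/-- One step in a sequence of fence moves; combinatorially equivalent fence diagrams
are identified. -/
def FenceStep (F F' : Fence) : Prop := FenceMove F F' ∨ FenceEquiv F F'

/-- `R(F)`: the generalized rectangular diagram whose vertices are the endpoints of
the wires of the fence diagram `F`. -/
noncomputable def fenceToGRD (F : Fence) : GRD :=
  F.wires.image (fun w => (w.1, w.2.1)) ∪ F.wires.image (fun w => (w.1, w.2.2))

/-- Every vertical edge of the diagram contains exactly two vertices. -/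
def VertTwo (R : GRD) : Prop :=
  ∀ a : ℝ, (∃ y : ℝ, (a, y) ∈ R) →
    ∃ y₁ y₂ : ℝ, y₁ < y₂ ∧ ∀ y : ℝ, ((a, y) ∈ R ↔ (y = y₁ ∨ y = y₂))

/-- `F` is a fence diagram `F(R)` of the diagram `R` (each of whose vertical edges is
assumed to contain exactly two vertices): its wires are the vertical edges of `R` and
its posts are horizontal segments at exactly the levels of the horizontal edges of
`R`. -/
def IsFenceOf (R : GRD) (F : Fence) : Prop :=
  F.posts = R.image Prod.snd ∧
  ∀ w : ℝ × ℝ × ℝ,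
    (w ∈ F.wires ↔ ((w.1, w.2.1) ∈ R ∧ (w.1, w.2.2) ∈ R ∧ w.2.1 < w.2.2))

/-!
Let `(x', y')` be the corner of the square opposite to the stabilized vertex `(x, y)`. Adding the
vertices `(x, y')` and `(x', y)` produces three corners of the square, and replacing `(x, y)` by
`(x', y')` is a flype whose rectangles `r_ij` slice a slight enlargement of the square so that each
contains one corner; the rectangles `r₀₁` and `r₁₀` then hold a single vertex each, and the
monotonicity conditions on them are vacuous. If `(x', y')` is to the upper right of `(x, y)`
this is the forward flype, otherwise the inverse one.
-/

/-- A relaxed type L stabilization, in which the square need not be small: the vertex `(x, y)` is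
replaced by the other three corners of a rectangle `[x, x'] × [y, y']` (or `[x', x] × [y', y]`),
other vertices being allowed in the strips spanned by the rectangle, though neither in it nor on
the lines through `(x', y')`. -/
def RectStabL (R R' : GRD) : Prop :=
  ∃ x y x' y' : ℝ, (x, y) ∈ R ∧
    ((x < x' ∧ y < y') ∨ (x' < x ∧ y' < y)) ∧
    (∀ p ∈ R, p.1 ≠ x') ∧ (∀ p ∈ R, p.2 ≠ y') ∧
    (∀ p ∈ R, p ∈ Set.uIcc (x, y) (x', y') → p = (x, y)) ∧
    R' = insert (x', y') (insert (x', y) (insert (x, y') (R.erase (x, y))))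

lemma CombEquiv.refl (R : GRD) : CombEquiv R R :=
  ⟨id, id, strictMono_id, strictMono_id, by simp⟩

lemma eq_of_mem_uIcc_of_not_strictlyBetween {u t u' : ℝ} (ht : t ∈ Set.uIcc u u')
    (hb : ¬ strictlyBetween u t u') (hne : t ≠ u') : t = u := by
  rw [Set.mem_uIcc] at ht
  unfold strictlyBetween at hb
  grind

lemma Stab.rectStabL {R R' : GRD} (h : Stab true R R') : RectStabL R R' := by
  obtain ⟨x, y, x', y', hxy, hdir, hx, hy, hx', hy', rfl⟩ := h
  refine ⟨x, y, x', y', hxy, hdir, hx', hy', fun p hp hbox => ?_, ?_⟩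
  · rw [Set.uIcc_prod_eq] at hbox
    exact Prod.ext (eq_of_mem_uIcc_of_not_strictlyBetween hbox.1 (hx p hp) (hx' p hp))
      (eq_of_mem_uIcc_of_not_strictlyBetween hbox.2 (hy p hp) (hy' p hp))
  · rw [Finset.insert_comm (x', y') (x', y), Finset.insert_comm (x', y') (x, y')]

lemma vertexAddition_insert_of_fresh_row {R : GRD} {x y y' : ℝ} (hxy : (x, y) ∈ R)
    (hy' : ∀ p ∈ R, p.2 ≠ y') : VertexAddition R (insert (x, y') R) :=
  ⟨(x, y'), fun h => hy' _ h rfl, rfl, .inl ⟨⟨_, hxy, rfl⟩, hy'⟩⟩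

lemma vertexAddition_insert_of_fresh_col {R : GRD} {x y x' : ℝ} (hxy : (x, y) ∈ R)
    (hx' : ∀ p ∈ R, p.1 ≠ x') : VertexAddition R (insert (x', y) R) :=
  ⟨(x', y), fun h => hx' _ h rfl, rfl, .inr ⟨⟨_, hxy, rfl⟩, hx'⟩⟩

lemma exists_Ioo_subset_Icc_on_finset {α : Type*} [LinearOrder α] [DenselyOrdered α]
    [NoMinOrder α] [NoMaxOrder α] (F : Finset α) (a b : α) :
    ∃ l < a, ∃ u > b, ∀ t ∈ F, t ∈ Set.Ioo l u → t ∈ Set.Icc a b := by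
  have : Nonempty α := ⟨a⟩
  obtain ⟨l, hFl, hla⟩ := Order.exists_between_finsets (F.filter (· < a)) {a} (by simp)
  obtain ⟨u, hbu, huF⟩ := Order.exists_between_finsets {b} (F.filter (b < ·)) (by simp)
  simp only [Finset.mem_filter, Finset.mem_singleton, forall_eq, and_imp] at hFl hla hbu huF
  refine ⟨l, hla, u, hbu, fun t htF ht => ⟨?_, ?_⟩⟩
  · exact not_lt.1 fun hta => (hFl t htF hta).not_gt ht.1
  · exact not_lt.1 fun hbt => (huF t htF hbt).not_gt ht.2

lemma exists_inRect_subset_Icc (R : GRD) (a b a' b' : ℝ) :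
    ∃ x₀ < a, ∃ x₂ > a', ∃ y₀ < b, ∃ y₂ > b',
      ∀ p ∈ R, inRect x₀ x₂ y₀ y₂ p → p ∈ Set.Icc (a, b) (a', b') := by
  obtain ⟨x₀, hx₀, x₂, hx₂, hx⟩ := exists_Ioo_subset_Icc_on_finset (R.image Prod.fst) a a'
  obtain ⟨y₀, hy₀, y₂, hy₂, hy⟩ := exists_Ioo_subset_Icc_on_finset (R.image Prod.snd) b b'
  refine ⟨x₀, hx₀, x₂, hx₂, y₀, hy₀, y₂, hy₂, fun p hp ⟨h₁, h₂, h₃, h₄⟩ => ?_⟩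
  rw [Set.Icc_prod_eq]
  exact ⟨hx _ (Finset.mem_image_of_mem _ hp) ⟨h₁, h₂⟩, hy _ (Finset.mem_image_of_mem _ hp) ⟨h₃, h₄⟩⟩

lemma image_update_id_insert {α : Type*} [DecidableEq α] {s : Finset α} {v w : α}
    (hv : v ∉ s) : (insert v s).image (Function.update id v w) = insert w s := by
  have hs : s.image (Function.update id v w) = s := by
    rw [Finset.image_congr (g := id) fun p hp =>
      Function.update_of_ne (ne_of_mem_of_not_mem hp hv) _ _, Finset.image_id]
  rw [Finset.image_insert, Function.update_self, hs]

lemma flypeLOnce_insert_corner_of_inRect {C : GRD} {a b a' b' x₀ x₂ y₀ y₂ : ℝ}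
    (hx₀ : x₀ < a) (ha : a < a') (hx₂ : a' < x₂) (hy₀ : y₀ < b) (hb : b < b') (hy₂ : b' < y₂)
    (hab' : (a, b') ∈ C) (ha'b : (a', b) ∈ C)
    (hC : ∀ p ∈ C, inRect x₀ x₂ y₀ y₂ p → p = (a, b') ∨ p = (a', b)) :
    FlypeLOnce (insert (a, b) C) (insert (a', b') C) := by
  obtain ⟨x₁, hax₁, hx₁a'⟩ := exists_between ha
  obtain ⟨y₁, hby₁, hy₁b'⟩ := exists_between hb
  have hcorner : ∀ p ∈ insert (a, b) C, inRect x₀ x₂ y₀ y₂ p →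
      p = (a, b) ∨ p = (a, b') ∨ p = (a', b) := fun p hp hr =>
    (Finset.mem_insert.1 hp).imp_right fun hpC => hC p hpC hr
  have h₀₀ : ∀ p ∈ insert (a, b) C, inRect x₀ x₁ y₀ y₁ p → p = (a, b) := by
    grind [inRect]
  have h₀₁ : ∀ p ∈ insert (a, b) C, inRect x₀ x₁ y₁ y₂ p → p = (a, b') := by
    grind [inRect]
  have h₁₀ : ∀ p ∈ insert (a, b) C, inRect x₁ x₂ y₀ y₁ p → p = (a', b) := by
    grind [inRect]
  have h₁₁ : ∀ p ∈ insert (a, b) C, ¬ inRect x₁ x₂ y₁ y₂ p := by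
    grind [inRect]
  have hab : (a, b) ∉ C := by
    grind [inRect]
  refine ⟨x₀, x₁, x₂, y₀, y₁, y₂, hx₀.trans hax₁, hx₁a'.trans hx₂, hy₀.trans hby₁,
    hy₁b'.trans hy₂, h₁₁, fun p hp q hq hpr hqr hpq => ?_, fun p hp q hq hpr hqr hpq => ?_,
    Function.update id (a, b) (a', b'), fun p _ hpr => ?_, fun p hp hpr => ?_,
    (image_update_id_insert hab).symm⟩
  · exact absurd (congrArg Prod.fst ((h₀₁ p hp hpr).trans (h₀₁ q hq hqr).symm)) hpq.ne
  · exact absurd (congrArg Prod.fst ((h₁₀ p hp hpr).trans (h₁₀ q hq hqr).symm)) hpq.ne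
  · refine Function.update_of_ne ?_ _ _
    rintro rfl
    exact hpr ⟨hx₀, hax₁, hy₀, hby₁⟩
  · obtain rfl := h₀₀ p hp hpr
    exact ⟨(a, b'), Finset.mem_insert_of_mem hab', (a', b), Finset.mem_insert_of_mem ha'b,
      ⟨hx₀, hax₁, hy₁b', hy₂⟩, rfl, ⟨hx₁a', hx₂, hy₀, hby₁⟩, rfl, Function.update_self _ _ _⟩

lemma flypeLOnce_insert_corner {C : GRD} {a b a' b' : ℝ} (ha : a < a') (hb : b < b')
    (hC : ∀ p, p ∈ C ∧ p ∈ Set.Icc (a, b) (a', b') ↔ p = (a, b') ∨ p = (a', b)) :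
    FlypeLOnce (insert (a, b) C) (insert (a', b') C) := by
  obtain ⟨x₀, hx₀, x₂, hx₂, y₀, hy₀, y₂, hy₂, hbox⟩ := exists_inRect_subset_Icc C a b a' b'
  exact flypeLOnce_insert_corner_of_inRect hx₀ ha hx₂ hy₀ hb hy₂
    ((hC _).2 (.inl rfl)).1 ((hC _).2 (.inr rfl)).1
    fun p hp hr => (hC p).1 ⟨hp, hbox p hp hr⟩

lemma flypeL_insert_opposite_corner {C : GRD} {x y x' y' : ℝ}
    (hdir : (x < x' ∧ y < y') ∨ (x' < x ∧ y' < y))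
    (hC : ∀ p, p ∈ C ∧ p ∈ Set.uIcc (x, y) (x', y') ↔ p = (x, y') ∨ p = (x', y)) :
    FlypeL (insert (x, y) C) (insert (x', y') C) := by
  rcases hdir with ⟨hx, hy⟩ | ⟨hx, hy⟩
  · rw [Set.uIcc_of_le (Prod.mk_le_mk.2 ⟨hx.le, hy.le⟩)] at hC
    exact .inl (flypeLOnce_insert_corner hx hy hC)
  · rw [Set.uIcc_of_ge (Prod.mk_le_mk.2 ⟨hx.le, hy.le⟩)] at hC
    exact .inr (flypeLOnce_insert_corner hx hy fun p => (hC p).trans or_comm)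

lemma mem_insert_corners_and_mem_uIcc_iff {B : GRD} {x y x' y' : ℝ}
    (hB : ∀ p ∈ B, p ∉ Set.uIcc (x, y) (x', y')) (p : ℝ × ℝ) :
    p ∈ insert (x', y) (insert (x, y') B) ∧ p ∈ Set.uIcc (x, y) (x', y') ↔
      p = (x, y') ∨ p = (x', y) := by
  have hxy' : (x, y') ∈ Set.uIcc (x, y) (x', y') := by
    simp only [Set.uIcc_prod_eq, Set.mem_prod, Set.left_mem_uIcc, Set.right_mem_uIcc, and_self]
  have hx'y : (x', y) ∈ Set.uIcc (x, y) (x', y') := by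
    simp only [Set.uIcc_prod_eq, Set.mem_prod, Set.left_mem_uIcc, Set.right_mem_uIcc, and_self]
  rw [Finset.mem_insert, Finset.mem_insert]
  constructor
  · rintro ⟨rfl | rfl | hp, hbox⟩
    · exact .inr rfl
    · exact .inl rfl
    · exact absurd hbox (hB p hp)
  · rintro (rfl | rfl)
    · exact ⟨.inr (.inl rfl), hxy'⟩
    · exact ⟨.inl rfl, hx'y⟩

theorem statement10_general (R R' : GRD) (h : RectStabL R R') :
    ∃ S T : GRD, VertexAddition R S ∧ VertexAddition S T ∧ FlypeL T R' := by
  obtain ⟨x, y, x', y', hxy, hdir, hx', hy', hbox, rfl⟩ := h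
  have hx'S : ∀ p ∈ insert (x, y') R, p.1 ≠ x' :=
    (Finset.forall_mem_insert _ _ _).2 ⟨hx' (x, y) hxy, hx'⟩
  have hempty : ∀ p ∈ R.erase (x, y), p ∉ Set.uIcc (x, y) (x', y') := fun p hp hpbox =>
    Finset.ne_of_mem_erase hp (hbox p (Finset.mem_of_mem_erase hp) hpbox)
  have hT : insert (x, y) (insert (x', y) (insert (x, y') (R.erase (x, y)))) =
      insert (x', y) (insert (x, y') R) := by
    rw [Finset.insert_comm (x, y) (x', y), Finset.insert_comm (x, y) (x, y'),
      Finset.insert_erase hxy]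
  refine ⟨insert (x, y') R, insert (x', y) (insert (x, y') R),
    vertexAddition_insert_of_fresh_row hxy hy',
    vertexAddition_insert_of_fresh_col (Finset.mem_insert_of_mem hxy) hx'S, ?_⟩
  rw [← hT]
  exact flypeL_insert_opposite_corner hdir (mem_insert_corners_and_mem_uIcc_iff hempty)

/-- a stabilization of type L is a combination of two vertex additions
and one flype of type L. -/
theorem statement10 (R R' : GRD) (h : Stab true R R') :
    ∃ S T U : GRD, VertexAddition R S ∧ VertexAddition S T ∧ FlypeL T U ∧
      CombEquiv U R' := by
  obtain ⟨S, T, hRS, hST, hTR'⟩ := statement10_general R R' h.rectStabL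
  exact ⟨S, T, R', hRS, hST, hTR', CombEquiv.refl R'⟩

end RectDiag
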